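/- Equality holds in the refined Green–Osher inequality ∫_γ (1/k) ds = (2/π)(L² − 4πA) + 2A if and only if the support function of γ has the form u(θ) = a₀ + a₁ cos θ + b₁ sin θ + a₂ cos 2θ + b₂ sin 2θ for constants with a₀ − 3a₂ cos 2θ − 3b₂ sin 2θ > 0 for all θ. -/

import Mathlib

open Real MeasureTheory intervalIntegral Set Filter

/-! Write `cₙ` for the Fourier coefficients of the support function `u`. Integrating by parts, the
difference of the two sides of the equality is `∫ (u''² - 5 u'² + 4 u²) - (2 / π) (∫ u)²`. By
Parseval's identity it equals `2π ∑ (n² - 1) (n² - 4) |cₙ|²`, where the term `n = 0` is cancelled by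
`(∫ u)²`. The remaining weights are nonnegative and vanish exactly for `|n| = 1, 2`, so equality
means that `cₙ = 0` for `|n| > 2`. -/

section AddCircle

variable {T : ℝ} [Fact (0 < T)]

lemma fourierCoeff_eq_zero_of_mem_span {S : Set ℤ} {f : C(AddCircle T, ℂ)}
    (hf : f ∈ Submodule.span ℂ (fourier '' S)) {n : ℤ} (hn : n ∉ S) : fourierCoeff f n = 0 := by
  have integrable (g : C(AddCircle T, ℂ)) : Integrable g AddCircle.haarAddCircle := by
    simpa using g.continuous.continuousOn.integrableOn_compact isCompact_univ
  induction hf using Submodule.span_induction with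
  | mem g hg =>
    obtain ⟨m, hm, rfl⟩ := hg
    rw [fourierCoeff_fourier, Pi.single_eq_of_ne (ne_of_mem_of_not_mem hm hn).symm]
  | zero => simp [fourierCoeff]
  | add g h _ _ hg hh =>
    rw [ContinuousMap.coe_add, fourierCoeff.add (integrable g) (integrable h), Pi.add_apply, hg, hh,
      add_zero]
  | smul c g _ hg => rw [ContinuousMap.coe_smul, fourierCoeff.const_smul, hg, smul_zero]

lemma eq_sum_fourierCoeff_smul_fourier {s : Finset ℤ} {f : C(AddCircle T, ℂ)}
    (hf : ∀ n ∉ s, fourierCoeff f n = 0) : f = ∑ n ∈ s, fourierCoeff f n • fourier n := by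
  have hsum : Summable (fourierCoeff f) := summable_of_ne_finset_zero hf
  refine (hasSum_fourier_series_of_summable hsum).unique (hasSum_sum_of_ne_finset_zero ?_)
  exact fun n hn => by rw [hf n hn, zero_smul]

end AddCircle

section Interval

variable {a b : ℝ}

lemma fourierCoeffOn_of_hasDerivAt_of_eq (hab : a < b) {f f' : ℝ → ℂ}
    (hf : ∀ x ∈ uIcc a b, HasDerivAt f (f' x) x) (hf' : IntervalIntegrable f' volume a b)
    (hfab : f a = f b) (n : ℤ) :
    fourierCoeffOn hab f' n = 2 * π * Complex.I * n / (b - a) * fourierCoeffOn hab f n := by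
  have hpi : (π : ℂ) ≠ 0 := Complex.ofReal_ne_zero.2 pi_ne_zero
  have hba : (b - a : ℂ) ≠ 0 := by exact_mod_cast (sub_pos.2 hab).ne'
  obtain rfl | hn := eq_or_ne n 0
  · simp [fourierCoeffOn_eq_integral, integral_eq_sub_of_hasDerivAt hf hf', hfab]
  · have hn' : (n : ℂ) ≠ 0 := Int.cast_ne_zero.2 hn
    rw [fourierCoeffOn_of_hasDerivAt hab hn hf hf', hfab]
    field_simp
    simp

lemma hasSum_sq_fourierCoeffOn_ofReal (hab : a < b) {f : ℝ → ℝ} (hf : ContinuousOn f (Icc a b)) :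
    HasSum (fun n : ℤ => ‖fourierCoeffOn hab (fun x => (f x : ℂ)) n‖ ^ 2)
      ((b - a)⁻¹ * ∫ x in a..b, f x ^ 2) := by
  have hf' : ContinuousOn (fun x => (f x : ℂ)) (Icc a b) := by fun_prop
  have hL2 : MemLp (fun x => (f x : ℂ)) 2 (volume.restrict (Icc a b)) :=
    (memLp_two_iff_integrable_sq_norm
      (hf'.aestronglyMeasurable measurableSet_Icc)).2 (hf'.norm.pow 2).integrableOn_Icc
  simpa using hasSum_sq_fourierCoeffOn hab
    (hL2.mono_measure (Measure.restrict_mono Ioc_subset_Icc_self le_rfl))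

lemma integral_mul_deriv_deriv_eq_neg_integral_sq {f f' f'' : ℝ → ℝ}
    (hf : ∀ x ∈ uIcc a b, HasDerivAt f (f' x) x) (hf' : ∀ x ∈ uIcc a b, HasDerivAt f' (f'' x) x)
    (hf'' : IntervalIntegrable f'' volume a b) (hfab : f a = f b) (hfab' : f' a = f' b) :
    ∫ x in a..b, f x * f'' x = -∫ x in a..b, f' x ^ 2 := by
  have hint : IntervalIntegrable f' volume a b :=
    ContinuousOn.intervalIntegrable fun x hx => (hf' x hx).continuousAt.continuousWithinAt
  rw [integral_mul_deriv_eq_deriv_mul hf hf' hint hf'', hfab, hfab', sub_self, zero_sub]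
  simp only [sq]

end Interval

/-- The `n`-th complex Fourier coefficient `(2π)⁻¹ ∫₀^{2π} u(θ) e^{-inθ} dθ` of a real function. -/
noncomputable def circleCoeff (u : ℝ → ℝ) (n : ℤ) : ℂ :=
  fourierCoeffOn two_pi_pos (fun θ => (u θ : ℂ)) n

/-- The real trigonometric polynomials `∑_{k ≤ N} (aₖ cos kθ + bₖ sin kθ)` of degree at most `N`. -/
def trigPoly (N : ℕ) : Submodule ℝ (ℝ → ℝ) :=
  Submodule.span ℝ (range fun (k : Fin (N + 1)) (θ : ℝ) => cos (k * θ)) ⊔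
    Submodule.span ℝ (range fun (k : Fin (N + 1)) (θ : ℝ) => sin (k * θ))

section TrigPoly

local instance : Fact (0 < 2 * π) := ⟨two_pi_pos⟩

variable {N : ℕ} {u : ℝ → ℝ}

lemma mem_trigPoly_iff : u ∈ trigPoly N ↔ ∃ a b : Fin (N + 1) → ℝ,
    ∀ θ, u θ = ∑ k, (a k * cos (k * θ) + b k * sin (k * θ)) := by
  simp only [trigPoly, Submodule.mem_sup, Submodule.mem_span_range_iff_exists_fun]
  constructor
  · rintro ⟨_, ⟨a, rfl⟩, _, ⟨b, rfl⟩, rfl⟩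
    exact ⟨a, b, fun θ => by simp [Finset.sum_add_distrib]⟩
  · rintro ⟨a, b, h⟩
    exact ⟨_, ⟨a, rfl⟩, _, ⟨b, rfl⟩, funext fun θ => by simp [h, Finset.sum_add_distrib]⟩

lemma mem_trigPoly_two_iff : u ∈ trigPoly 2 ↔ ∃ a₀ a₁ b₁ a₂ b₂ : ℝ,
    ∀ θ, u θ = a₀ + a₁ * cos θ + b₁ * sin θ + a₂ * cos (2 * θ) + b₂ * sin (2 * θ) := by
  rw [mem_trigPoly_iff]
  constructor
  · rintro ⟨a, b, h⟩
    refine ⟨a 0, a 1, b 1, a 2, b 2, fun θ => ?_⟩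
    rw [h, Fin.sum_univ_three]
    simp only [Fin.isValue, Nat.reduceAdd, Fin.coe_ofNat_eq_mod, Nat.zero_mod, Nat.one_mod,
      Nat.mod_succ, Nat.cast_zero, Nat.cast_one, Nat.cast_ofNat, zero_mul, one_mul, cos_zero,
      sin_zero]
    ring
  · rintro ⟨a₀, a₁, b₁, a₂, b₂, h⟩
    refine ⟨![a₀, a₁, a₂], ![0, b₁, b₂], fun θ => ?_⟩
    rw [h, Fin.sum_univ_three]
    simp only [Fin.isValue, Nat.reduceAdd, Fin.coe_ofNat_eq_mod, Nat.zero_mod, Nat.one_mod,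
      Nat.mod_succ, Nat.cast_zero, Nat.cast_one, Nat.cast_ofNat, zero_mul, one_mul, cos_zero,
      sin_zero, Matrix.cons_val]
    ring

lemma cos_intCast_mul_mem_trigPoly {n : ℤ} (hn : n.natAbs ≤ N) :
    (fun θ : ℝ => cos (n * θ)) ∈ trigPoly N := by
  refine Submodule.mem_sup_left (Submodule.subset_span ⟨⟨n.natAbs, Nat.lt_succ_of_le hn⟩, ?_⟩)
  obtain ⟨k, rfl | rfl⟩ := n.eq_nat_or_neg <;> simp

lemma sin_intCast_mul_mem_trigPoly {n : ℤ} (hn : n.natAbs ≤ N) :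
    (fun θ : ℝ => sin (n * θ)) ∈ trigPoly N := by
  have hmem : (fun θ : ℝ => sin (n.natAbs * θ)) ∈ trigPoly N :=
    Submodule.mem_sup_right (Submodule.subset_span ⟨⟨n.natAbs, Nat.lt_succ_of_le hn⟩, rfl⟩)
  obtain ⟨k, rfl | rfl⟩ := n.eq_nat_or_neg
  · simpa using hmem
  · simpa [Pi.neg_def] using neg_mem hmem

lemma fourier_two_pi_coe (n : ℤ) (θ : ℝ) :
    fourier n (θ : AddCircle (2 * π)) = (cos (n * θ) : ℂ) + sin (n * θ) * Complex.I := by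
  have hpi : (π : ℂ) ≠ 0 := Complex.ofReal_ne_zero.2 pi_ne_zero
  rw [fourier_coe_apply, Complex.ofReal_cos, Complex.ofReal_sin, ← Complex.exp_mul_I]
  congr 1
  push_cast
  field_simp

lemma circleCoeff_eq_fourierCoeff {f : AddCircle (2 * π) → ℂ} (hf : ∀ θ : ℝ, f θ = u θ) (n : ℤ) :
    circleCoeff u n = fourierCoeff f n := by
  rw [circleCoeff, fourierCoeffOn_eq_integral, fourierCoeff_eq_intervalIntegral _ _ 0]
  simp only [fourier_coe_apply, hf, sub_zero, zero_add]

lemma exists_continuousMap_addCircle (hu : Continuous u) (hper : Function.Periodic u (2 * π)) :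
    ∃ f : C(AddCircle (2 * π), ℂ), ∀ θ : ℝ, f θ = u θ := by
  have hper' : Function.Periodic (fun θ => (u θ : ℂ)) (2 * π) := fun θ => by
    simp only [hper θ]
  refine ⟨⟨hper'.lift, continuous_coinduced_dom.2 ?_⟩, hper'.lift_coe⟩
  exact Complex.continuous_ofReal.comp hu

lemma mem_span_fourier_of_mem_trigPoly {f : C(AddCircle (2 * π), ℂ)} (hf : ∀ θ : ℝ, f θ = u θ)
    (hu : u ∈ trigPoly N) : f ∈ Submodule.span ℂ (fourier '' {n : ℤ | n.natAbs ≤ N}) := by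
  obtain ⟨a, b, hab⟩ := mem_trigPoly_iff.1 hu
  -- `a cos x + b sin x = (a - bi)/2 e^{ix} + (a + bi)/2 e^{-ix}`
  have hexpand : f = ∑ k : Fin (N + 1),
      (((a k - b k * Complex.I) / 2) • fourier (k : ℤ) +
        ((a k + b k * Complex.I) / 2) • fourier (-(k : ℤ))) := by
    ext x
    induction x using QuotientAddGroup.induction_on with | H θ
    rw [hf, hab]
    simp only [ContinuousMap.sum_apply, ContinuousMap.add_apply, ContinuousMap.smul_apply,
      smul_eq_mul, fourier_two_pi_coe]
    push_cast
    refine Finset.sum_congr rfl fun k _ => ?_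
    simp only [neg_mul, Complex.cos_neg, Complex.sin_neg]
    linear_combination b k * Complex.sin (k * θ) * Complex.I_sq
  rw [hexpand]
  refine Submodule.sum_mem _ fun k _ => Submodule.add_mem _ ?_ ?_
  all_goals
    refine Submodule.smul_mem _ _ (Submodule.subset_span (mem_image_of_mem _ ?_))
    simpa using Fin.is_le k

lemma mem_trigPoly_iff_circleCoeff_eq_zero (hu : Continuous u)
    (hper : Function.Periodic u (2 * π)) :
    u ∈ trigPoly N ↔ ∀ n : ℤ, N < n.natAbs → circleCoeff u n = 0 := by
  obtain ⟨f, hf⟩ := exists_continuousMap_addCircle hu hper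
  simp only [circleCoeff_eq_fourierCoeff hf]
  refine ⟨fun h n hn => fourierCoeff_eq_zero_of_mem_span
    (mem_span_fourier_of_mem_trigPoly hf h) hn.not_ge, fun h => ?_⟩
  have hsum : f = ∑ n ∈ Finset.Icc (-N : ℤ) N, fourierCoeff f n • fourier n :=
    eq_sum_fourierCoeff_smul_fourier fun n hn => h n (by grind)
  have hre : u = ∑ n ∈ Finset.Icc (-N : ℤ) N, ((fourierCoeff f n).re • (fun θ => cos (n * θ)) -
      (fourierCoeff f n).im • fun θ => sin (n * θ)) := by
    ext θ
    have hθ := congrArg Complex.re (congrArg (fun g : C(AddCircle (2 * π), ℂ) => g θ) hsum)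
    simpa [hf, fourier_two_pi_coe, Complex.mul_re, -fourier_apply, -Complex.ofReal_cos,
      -Complex.ofReal_sin] using hθ
  rw [hre]
  refine Submodule.sum_mem _ fun n hn => ?_
  have hn' : n.natAbs ≤ N := by
    rw [Finset.mem_Icc] at hn
    lia
  exact Submodule.sub_mem _ (Submodule.smul_mem _ _ (cos_intCast_mul_mem_trigPoly hn'))
    (Submodule.smul_mem _ _ (sin_intCast_mul_mem_trigPoly hn'))

end TrigPoly

/-- The left side minus the right side of the equality, for the curve with support function `u`:
`∫ (u'' + u)²` is `∫ 1/k ds`, `∫ u` is the length and `(1 / 2) ∫ u (u'' + u)` is the area. -/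
noncomputable def greenOsherDeficit (u : ℝ → ℝ) : ℝ :=
  let L := ∫ θ in 0..2 * π, u θ
  let A := (1 / 2) * ∫ θ in 0..2 * π, u θ * (deriv (deriv u) θ + u θ)
  (∫ θ in 0..2 * π, (deriv (deriv u) θ + u θ) ^ 2) - ((2 / π) * (L ^ 2 - 4 * π * A) + 2 * A)

/-- The coefficient of `2π |cₙ|²` in the Fourier expansion of the Green–Osher deficit. -/
def greenOsherWeight (n : ℤ) : ℝ := if n = 0 then 0 else ((n : ℝ) ^ 2 - 1) * ((n : ℝ) ^ 2 - 4)

lemma greenOsherWeight_pos {n : ℤ} (hn : 2 < n.natAbs) : 0 < greenOsherWeight n := by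
  have hsq : (4 : ℝ) < (n : ℝ) ^ 2 := by
    exact_mod_cast Int.natAbs_lt_iff_sq_lt.1 (show (2 : ℤ).natAbs < n.natAbs from hn)
  rw [greenOsherWeight, if_neg (by grind)]
  exact mul_pos (by linarith) (by linarith)

lemma greenOsherWeight_eq_zero {n : ℤ} (hn : n.natAbs ≤ 2) : greenOsherWeight n = 0 := by
  obtain ⟨hl, hr⟩ : -2 ≤ n ∧ n ≤ 2 := by lia
  interval_cases n <;> norm_num [greenOsherWeight]

lemma greenOsherWeight_nonneg (n : ℤ) : 0 ≤ greenOsherWeight n := by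
  obtain hn | hn := le_or_gt n.natAbs 2
  · exact (greenOsherWeight_eq_zero hn).ge
  · exact (greenOsherWeight_pos hn).le

lemma periodic_deriv {f : ℝ → ℝ} {c : ℝ} (hf : Function.Periodic f c) :
    Function.Periodic (deriv f) c := fun x => by
  rw [← deriv_comp_add_const, funext hf]

lemma circleCoeff_zero (u : ℝ → ℝ) :
    circleCoeff u 0 = ((2 * π)⁻¹ * ∫ θ in 0..2 * π, u θ : ℝ) := by
  simp [circleCoeff, fourierCoeffOn_eq_integral, intervalIntegral.integral_ofReal]

lemma norm_sq_circleCoeff_deriv {u : ℝ → ℝ} (hu : ContDiff ℝ 1 u)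
    (hper : Function.Periodic u (2 * π)) (n : ℤ) :
    ‖circleCoeff (deriv u) n‖ ^ 2 = n ^ 2 * ‖circleCoeff u n‖ ^ 2 := by
  have hderiv (θ : ℝ) : HasDerivAt (fun θ => (u θ : ℂ)) (deriv u θ : ℝ) θ :=
    (hu.differentiable one_ne_zero θ).hasDerivAt.ofReal_comp
  have hint : IntervalIntegrable (fun θ => ((deriv u θ : ℝ) : ℂ)) volume 0 (2 * π) :=
    (Complex.continuous_ofReal.comp hu.continuous_deriv_one).intervalIntegrable _ _
  have hcoeff : circleCoeff (deriv u) n = Complex.I * n * circleCoeff u n := by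
    have hpi : (π : ℂ) ≠ 0 := Complex.ofReal_ne_zero.2 pi_ne_zero
    rw [circleCoeff, fourierCoeffOn_of_hasDerivAt_of_eq two_pi_pos (fun θ _ => hderiv θ) hint
      (by rw [hper.eq]), circleCoeff]
    push_cast
    rw [sub_zero]
    field_simp
  rw [hcoeff]
  simp [mul_pow]

section Deficit

variable {u : ℝ → ℝ}

lemma greenOsherDeficit_eq_integral_sq_derivs (hu : ContDiff ℝ 2 u)
    (hper : Function.Periodic u (2 * π)) :
    greenOsherDeficit u = (∫ θ in 0..2 * π, deriv (deriv u) θ ^ 2) -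
      5 * (∫ θ in 0..2 * π, deriv u θ ^ 2) + 4 * (∫ θ in 0..2 * π, u θ ^ 2) -
      2 / π * (∫ θ in 0..2 * π, u θ) ^ 2 := by
  have hu' : ContDiff ℝ 1 (deriv u) := hu.deriv'
  have hcont : Continuous u := hu.continuous
  have hcont'' : Continuous (deriv (deriv u)) := hu'.continuous_deriv_one
  have hparts : ∫ θ in 0..2 * π, u θ * deriv (deriv u) θ =
      -∫ θ in 0..2 * π, deriv u θ ^ 2 :=
    integral_mul_deriv_deriv_eq_neg_integral_sq
      (fun θ _ => (hu.differentiable two_ne_zero θ).hasDerivAt)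
      (fun θ _ => (hu'.differentiable one_ne_zero θ).hasDerivAt)
      (hcont''.intervalIntegrable _ _) hper.eq.symm (periodic_deriv hper).eq.symm
  have hi₁ : IntervalIntegrable (fun θ => u θ * deriv (deriv u) θ) volume 0 (2 * π) :=
    (by fun_prop : Continuous _).intervalIntegrable _ _
  have hi₂ : IntervalIntegrable (fun θ => u θ ^ 2) volume 0 (2 * π) :=
    (by fun_prop : Continuous _).intervalIntegrable _ _
  have hi₃ : IntervalIntegrable (fun θ => deriv (deriv u) θ ^ 2) volume 0 (2 * π) :=
    (by fun_prop : Continuous _).intervalIntegrable _ _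
  have harea : ∫ θ in 0..2 * π, u θ * (deriv (deriv u) θ + u θ) =
      (∫ θ in 0..2 * π, u θ ^ 2) - ∫ θ in 0..2 * π, deriv u θ ^ 2 := by
    rw [sub_eq_add_neg, ← hparts, ← integral_add hi₂ hi₁]
    congr! 2
    ring
  have hradius : ∫ θ in 0..2 * π, (deriv (deriv u) θ + u θ) ^ 2 =
      (∫ θ in 0..2 * π, deriv (deriv u) θ ^ 2) -
        2 * (∫ θ in 0..2 * π, deriv u θ ^ 2) + ∫ θ in 0..2 * π, u θ ^ 2 := by
    rw [sub_eq_add_neg, ← mul_neg, ← hparts, ← intervalIntegral.integral_const_mul,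
      ← integral_add hi₃ (hi₁.const_mul 2), ← integral_add (hi₃.add (hi₁.const_mul 2)) hi₂]
    congr! 2
    ring
  rw [greenOsherDeficit, harea, hradius]
  field_simp
  ring

lemma hasSum_greenOsherWeight_mul_norm_sq (hu : ContDiff ℝ 2 u)
    (hper : Function.Periodic u (2 * π)) :
    HasSum (fun n => greenOsherWeight n * ‖circleCoeff u n‖ ^ 2)
      ((2 * π)⁻¹ * greenOsherDeficit u) := by
  have hu' : ContDiff ℝ 1 (deriv u) := hu.deriv'
  have hparseval (f : ℝ → ℝ) (hf : Continuous f) :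
      HasSum (fun n => ‖circleCoeff f n‖ ^ 2)
        ((2 * π)⁻¹ * ∫ θ in 0..2 * π, f θ ^ 2) := by
    simpa only [circleCoeff, sub_zero] using
      hasSum_sq_fourierCoeffOn_ofReal two_pi_pos hf.continuousOn
  have hsum := (((hparseval _ hu'.continuous_deriv_one).sub
    ((hparseval _ hu'.continuous).mul_left 5)).add ((hparseval u hu.continuous).mul_left 4)).sub
    (hasSum_ite_eq 0 (4 * ‖circleCoeff u 0‖ ^ 2))
  convert! hsum using 1
  · ext n
    rw [norm_sq_circleCoeff_deriv hu' (periodic_deriv hper),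
      norm_sq_circleCoeff_deriv (hu.of_le one_le_two) hper]
    obtain rfl | hn := eq_or_ne n 0
    · simp [greenOsherWeight]
    · simp only [greenOsherWeight, hn, if_false]
      ring
  · rw [greenOsherDeficit_eq_integral_sq_derivs hu hper, circleCoeff_zero, Complex.norm_real,
      Real.norm_eq_abs, sq_abs]
    field_simp
    ring

lemma greenOsherDeficit_eq_zero_iff (hu : ContDiff ℝ 2 u) (hper : Function.Periodic u (2 * π)) :
    greenOsherDeficit u = 0 ↔ u ∈ trigPoly 2 := by
  have hsum := hasSum_greenOsherWeight_mul_norm_sq hu hper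
  have hterm (n : ℤ) :
      greenOsherWeight n * ‖circleCoeff u n‖ ^ 2 = 0 ↔ (2 < n.natAbs → circleCoeff u n = 0) := by
    obtain hn | hn := le_or_gt n.natAbs 2
    · simp [greenOsherWeight_eq_zero hn, hn.not_gt]
    · simp [(greenOsherWeight_pos hn).ne', hn]
  calc greenOsherDeficit u = 0
    _ ↔ (2 * π)⁻¹ * greenOsherDeficit u = 0 := by simp [pi_ne_zero]
    _ ↔ ∀ n, greenOsherWeight n * ‖circleCoeff u n‖ ^ 2 = 0 := by
      have hnonneg (n : ℤ) : 0 ≤ greenOsherWeight n * ‖circleCoeff u n‖ ^ 2 :=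
        mul_nonneg (greenOsherWeight_nonneg n) (sq_nonneg _)
      have hzero := hasSum_zero_iff_of_nonneg (L := .unconditional ℤ) hnonneg
      exact Iff.trans ⟨fun h => h ▸ hsum, hsum.unique⟩ (hzero.trans funext_iff)
    _ ↔ ∀ n : ℤ, 2 < n.natAbs → circleCoeff u n = 0 := forall_congr' hterm
    _ ↔ u ∈ trigPoly 2 := (mem_trigPoly_iff_circleCoeff_eq_zero hu.continuous hper).symm

end Deficit

-- The derivative is left in the shape of the function, so that the lemma applies to it again.
lemma hasDerivAt_trig_two (a₀ a₁ b₁ a₂ b₂ θ : ℝ) :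
    HasDerivAt (fun θ => a₀ + a₁ * cos θ + b₁ * sin θ + a₂ * cos (2 * θ) + b₂ * sin (2 * θ))
      (0 + b₁ * cos θ + -a₁ * sin θ + 2 * b₂ * cos (2 * θ) + -(2 * a₂) * sin (2 * θ)) θ := by
  have hlin : HasDerivAt (fun θ : ℝ => 2 * θ) 2 θ := by simpa using (hasDerivAt_id θ).const_mul 2
  convert! (((((hasDerivAt_cos θ).const_mul a₁).const_add a₀).add
    ((hasDerivAt_sin θ).const_mul b₁)).add (hlin.cos.const_mul a₂)).add
    (hlin.sin.const_mul b₂) using 1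
  ring

lemma deriv_deriv_add_self_of_eq_trig {u : ℝ → ℝ} {a₀ a₁ b₁ a₂ b₂ : ℝ}
    (hu : ∀ θ, u θ = a₀ + a₁ * cos θ + b₁ * sin θ + a₂ * cos (2 * θ) + b₂ * sin (2 * θ)) (θ : ℝ) :
    deriv (deriv u) θ + u θ = a₀ - 3 * a₂ * cos (2 * θ) - 3 * b₂ * sin (2 * θ) := by
  rw [funext hu, funext fun θ => (hasDerivAt_trig_two a₀ a₁ b₁ a₂ b₂ θ).deriv,
    (hasDerivAt_trig_two _ _ _ _ _ θ).deriv]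
  ring

theorem stmt_11_general {u : ℝ → ℝ} (hu : ContDiff ℝ 2 u) (hper : Function.Periodic u (2 * π))
    {L A : ℝ} (hL : L = ∫ θ in 0..2 * π, u θ)
    (hA : A = (1 / 2) * ∫ θ in 0..2 * π, u θ * (deriv (deriv u) θ + u θ)) :
    (∫ θ in 0..2 * π, (deriv (deriv u) θ + u θ) ^ 2)
        = (2 / π) * (L ^ 2 - 4 * π * A) + 2 * A ↔
      ∃ a₀ a₁ b₁ a₂ b₂ : ℝ, ∀ θ, u θ = a₀ + a₁ * cos θ + b₁ * sin θ +
        a₂ * cos (2 * θ) + b₂ * sin (2 * θ) := by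
  subst hL hA
  rw [← mem_trigPoly_two_iff, ← greenOsherDeficit_eq_zero_iff hu hper, greenOsherDeficit,
    sub_eq_zero]

/-- Equality in the refined Green–Osher inequality holds iff the support
function is a trigonometric polynomial of degree `≤ 2`,
`u(θ) = a₀ + a₁ cos θ + b₁ sin θ + a₂ cos 2θ + b₂ sin 2θ`, with
`a₀ − 3a₂ cos 2θ − 3b₂ sin 2θ > 0` for all `θ`. -/
theorem stmt_11 (u : ℝ → ℝ) (hu : ContDiff ℝ (⊤ : ℕ∞) u)
    (hper : Function.Periodic u (2 * π))
    (hconv : ∀ θ, 0 < deriv (deriv u) θ + u θ)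
    (L A : ℝ)
    (hL : L = ∫ θ in (0:ℝ)..(2 * π), u θ)
    (hA : A = (1 / 2) * ∫ θ in (0:ℝ)..(2 * π), u θ * (deriv (deriv u) θ + u θ)) :
    (∫ θ in (0:ℝ)..(2 * π), (deriv (deriv u) θ + u θ) ^ 2)
        = (2 / π) * (L ^ 2 - 4 * π * A) + 2 * A ↔
      ∃ a₀ a₁ b₁ a₂ b₂ : ℝ,
        (∀ θ, u θ = a₀ + a₁ * Real.cos θ + b₁ * Real.sin θ +
          a₂ * Real.cos (2 * θ) + b₂ * Real.sin (2 * θ)) ∧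
        (∀ θ, 0 < a₀ - 3 * a₂ * Real.cos (2 * θ) - 3 * b₂ * Real.sin (2 * θ)) :=
  (stmt_11_general (contDiff_infty.1 hu 2) hper hL hA).trans <| exists₅_congr fun _ _ _ _ _ =>
    (and_iff_left_of_imp fun h θ => deriv_deriv_add_self_of_eq_trig h θ ▸ hconv θ).symm
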